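/- Let k be an algebraically closed field of characteristic p > 0, let F = k(q, r, s) be the rational function field in three variables, and let K = F((t)) be the field of formal Laurent series over F. Then the polynomial g = ((X^p − q)^p − t^p·r)^p + t^{p⁴}·X − t^{p³}·s ∈ K[X] is irreducible over K and separable; in particular, L := K[X]/(g) is a separable field extension of K of degree p³. -/

import Mathlib

open Polynomial

lemma aux_poly {k : Type*} [Field k] (p : ℕ) [hp : Fact p.Prime] [CharP k p]
    (c : (Fin 3 → Fin p) → MvPolynomial (Fin 3) k)
    (h : ∑ n, c n ^ p * ∏ i, (MvPolynomial.X i : MvPolynomial (Fin 3) k) ^ (n i : ℕ) = 0)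
    (n₀ : Fin 3 → Fin p) : c n₀ = 0 := by
  classical
  have hp0 : p ≠ 0 := hp.out.ne_zero
  let e : (Fin 3 → Fin p) → (Fin 3 →₀ ℕ) := fun n => Finsupp.equivFunOnFinite.symm (fun i => (n i : ℕ))
  have he : ∀ n i, e n i = (n i : ℕ) := fun n i => rfl
  have hmon : ∀ n, (∏ i, (MvPolynomial.X i : MvPolynomial (Fin 3) k) ^ (n i : ℕ))
      = MvPolynomial.monomial (e n) 1 := by
    intro n
    rw [MvPolynomial.monomial_eq, Finsupp.prod_fintype _ _ (by simp)]
    simp [he]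
  ext m
  have h1 := congrArg (MvPolynomial.coeff (p • m + e n₀)) h
  rw [MvPolynomial.coeff_sum, Finset.sum_eq_single n₀] at h1
  · rw [hmon, MvPolynomial.coeff_mul_monomial, ← MvPolynomial.map_frobenius_expand p,
      MvPolynomial.coeff_map, MvPolynomial.coeff_expand_smul p hp0] at h1
    simpa [frobenius_def, hp0] using h1
  · intro n _ hn
    rw [hmon, MvPolynomial.coeff_mul_monomial']
    split_ifs with hle
    · obtain ⟨i, hi⟩ : ∃ i, n i ≠ n₀ i := by
        by_contra! hcon
        exact hn (funext hcon)
      rw [← MvPolynomial.map_frobenius_expand p, MvPolynomial.coeff_map,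
        MvPolynomial.coeff_expand_of_not_dvd (i := i)]
      · simp
      · intro hd
        apply hi
        have hle' := hle i
        have e1 : (p • m + e n₀ - e n) i = p * m i + (n₀ i : ℕ) - (n i : ℕ) := by
          simp [he]
        rw [e1] at hd
        have hle2 : (n i : ℕ) ≤ p * m i + (n₀ i : ℕ) := by simpa [he] using hle'
        have h3 : (n i : ℕ) ≡ p * m i + (n₀ i : ℕ) [MOD p] := (Nat.modEq_iff_dvd' hle2).mpr hd
        have h4 : (n i : ℕ) ≡ (n₀ i : ℕ) [MOD p] := by
          refine h3.trans ?_
          simp [Nat.ModEq]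
        exact Fin.ext (Nat.ModEq.eq_of_lt_of_lt h4 (n i).2 (n₀ i).2)
    · rfl
  · simp

lemma aux_frac {k : Type*} [Field k] (p : ℕ) [hp : Fact p.Prime] [CharP k p]
    (F : Type*) [Field F] [Algebra (MvPolynomial (Fin 3) k) F]
    [IsFractionRing (MvPolynomial (Fin 3) k) F]
    (c : (Fin 3 → Fin p) → F)
    (h : ∑ n, c n ^ p * ∏ i, (algebraMap (MvPolynomial (Fin 3) k) F (MvPolynomial.X i)) ^ (n i : ℕ) = 0)
    (n₀ : Fin 3 → Fin p) : c n₀ = 0 := by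
  classical
  obtain ⟨b, hb⟩ := IsLocalization.exist_integer_multiples_of_finset
    (nonZeroDivisors (MvPolynomial (Fin 3) k)) (Finset.univ.image c)
  have hb' : ∀ n, ∃ d, algebraMap (MvPolynomial (Fin 3) k) F d
      = algebraMap (MvPolynomial (Fin 3) k) F b * c n := by
    intro n
    obtain ⟨d, hd⟩ := hb (c n) (by simp)
    exact ⟨d, by rw [hd, Algebra.smul_def]⟩
  choose d hd using hb'
  have hinj := IsFractionRing.injective (MvPolynomial (Fin 3) k) F
  have hb0 : algebraMap (MvPolynomial (Fin 3) k) F b ≠ 0 := by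
    rw [Ne, map_eq_zero_iff _ hinj]
    exact nonZeroDivisors.coe_ne_zero b
  have key : d n₀ = 0 := by
    apply aux_poly p d
    apply hinj
    simp only [map_sum, map_mul, map_pow, map_prod, hd, map_zero, mul_pow]
    simp only [mul_assoc]
    rw [← Finset.mul_sum, h, mul_zero]
  have := hd n₀
  rw [key, map_zero] at this
  exact (mul_eq_zero.mp this.symm).resolve_left hb0

lemma aux_indep (p : ℕ) [hp : Fact p.Prime] {F K L : Type*} [Field F] [CharP F p] [Field K] [Field L]
    [Algebra (PowerSeries F) K] [IsFractionRing (PowerSeries F) K] [Algebra K L]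
    [Algebra (PowerSeries F) L] [IsScalarTower (PowerSeries F) K L]
    (Q : Fin 3 → F)
    (hQ : ∀ c : (Fin 3 → Fin p) → F, ∑ n, c n ^ p * ∏ i, Q i ^ (n i : ℕ) = 0 → ∀ n, c n = 0)
    (z b : Fin 3 → integralClosure (PowerSeries F) L)
    (hz : ∀ i, z i ^ p = algebraMap (PowerSeries F) _ (PowerSeries.C (Q i))
      + algebraMap (PowerSeries F) _ PowerSeries.X * b i) :
    LinearIndependent K (fun n : Fin 3 → Fin p => ∏ i, (z i : L) ^ (n i : ℕ)) := by
  classical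
  have hAK := IsFractionRing.injective (PowerSeries F) K
  have hAL : Function.Injective (algebraMap (PowerSeries F) L) := by
    rw [IsScalarTower.algebraMap_eq (PowerSeries F) K L]
    exact (algebraMap K L).injective.comp hAK
  have hAB : Function.Injective (algebraMap (PowerSeries F) (integralClosure (PowerSeries F) L)) := by
    intro x y hxy
    exact hAL (congrArg Subtype.val hxy)
  have : CharP (PowerSeries F) p :=
    charP_of_injective_ringHom (PowerSeries.C_injective (R := F)) p
  have : CharP (integralClosure (PowerSeries F) L) p := charP_of_injective_ringHom hAB p
  rw [← LinearIndependent.iff_fractionRing (PowerSeries F) K, Fintype.linearIndependent_iff]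
  -- the one-step divisibility
  have step : ∀ c : (Fin 3 → Fin p) → PowerSeries F,
      ∑ n, c n • ∏ i, (z i : L) ^ (n i : ℕ) = 0 → ∀ n, PowerSeries.X ∣ c n := by
    intro c hc
    have hB : ∑ n, algebraMap (PowerSeries F) (integralClosure (PowerSeries F) L) (c n)
        * ∏ i, z i ^ (n i : ℕ) = 0 := by
      apply Subtype.ext
      simp only [Algebra.smul_def] at hc
      simpa using hc
    have hB2 := congrArg (· ^ p) hB
    simp only [sum_pow_char p, mul_pow, zero_pow hp.out.ne_zero, ← Finset.prod_pow] at hB2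
    have hB3 : ∀ n : Fin 3 → Fin p, ∏ i, (z i ^ (n i : ℕ)) ^ p = ∏ i, (z i ^ p) ^ (n i : ℕ) := by
      intro n
      refine Finset.prod_congr rfl fun i _ => ?_
      rw [← pow_mul, ← pow_mul, mul_comm]
    simp only [hB3, hz] at hB2
    let I : Ideal (integralClosure (PowerSeries F) L) :=
      Ideal.span {algebraMap (PowerSeries F) _ PowerSeries.X}
    have hX : Ideal.Quotient.mk I (algebraMap (PowerSeries F) _ PowerSeries.X) = 0 :=
      Ideal.Quotient.eq_zero_iff_mem.mpr (Ideal.mem_span_singleton_self _)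
    have hB4 := congrArg (Ideal.Quotient.mk I) hB2
    simp only [map_sum, map_mul, map_pow, map_prod, map_add, hX, zero_mul, add_zero, map_zero] at hB4
    let a : PowerSeries F := ∑ n, c n ^ p * ∏ i, PowerSeries.C (Q i) ^ (n i : ℕ)
    have ha : algebraMap (PowerSeries F) (integralClosure (PowerSeries F) L) a ∈ I := by
      rw [← Ideal.Quotient.eq_zero_iff_mem, ← hB4]
      simp [a]
    obtain ⟨w, hw⟩ := Ideal.mem_span_singleton.mp ha
    have hw' : algebraMap (PowerSeries F) L a = algebraMap (PowerSeries F) L PowerSeries.X * (w : L) :=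
      congrArg Subtype.val hw
    have hXK : algebraMap (PowerSeries F) K PowerSeries.X ≠ 0 := by
      rw [Ne, map_eq_zero_iff _ hAK]
      exact PowerSeries.X_ne_zero
    have hXL : algebraMap (PowerSeries F) L PowerSeries.X ≠ 0 := by
      rw [Ne, map_eq_zero_iff _ hAL]
      exact PowerSeries.X_ne_zero
    have hwK : algebraMap K L (algebraMap (PowerSeries F) K a
        / algebraMap (PowerSeries F) K PowerSeries.X) = (w : L) := by
      rw [map_div₀, ← IsScalarTower.algebraMap_apply, ← IsScalarTower.algebraMap_apply, hw',
        mul_div_cancel_left₀ _ hXL]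
    have hint : IsIntegral (PowerSeries F) (algebraMap (PowerSeries F) K a
        / algebraMap (PowerSeries F) K PowerSeries.X) := by
      rw [← isIntegral_algebraMap_iff (algebraMap K L).injective, hwK]
      exact w.2
    obtain ⟨y, hy⟩ := IsIntegrallyClosed.isIntegral_iff.mp hint
    have hXa : PowerSeries.X ∣ a := by
      refine ⟨y, hAK ?_⟩
      rw [map_mul, hy, mul_div_cancel₀ _ hXK]
    rw [PowerSeries.X_dvd_iff] at hXa
    have hfin := hQ (fun n => PowerSeries.constantCoeff (c n)) (by simpa [a] using hXa)
    intro n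
    exact PowerSeries.X_dvd_iff.mpr (hfin n)
  have all : ∀ N : ℕ, ∀ c : (Fin 3 → Fin p) → PowerSeries F,
      ∑ n, c n • ∏ i, (z i : L) ^ (n i : ℕ) = 0 → ∀ n, PowerSeries.X ^ N ∣ c n := by
    intro N
    induction N with
    | zero => intro c _ n; simp
    | succ N ih =>
      intro c hc n
      choose d hd using step c hc
      have hXL : algebraMap (PowerSeries F) L PowerSeries.X ≠ 0 := by
        rw [Ne, map_eq_zero_iff _ hAL]
        exact PowerSeries.X_ne_zero
      have hd0 : ∑ n, d n • ∏ i, (z i : L) ^ (n i : ℕ) = 0 := by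
        have h1 : algebraMap (PowerSeries F) L PowerSeries.X
            * ∑ n, d n • ∏ i, (z i : L) ^ (n i : ℕ) = 0 := by
          rw [← hc, Finset.mul_sum]
          refine Finset.sum_congr rfl fun n _ => ?_
          rw [hd n, Algebra.smul_def, Algebra.smul_def, map_mul, mul_assoc]
        exact (mul_eq_zero.mp h1).resolve_left hXL
      rw [hd n, pow_succ']
      exact mul_dvd_mul_left _ (ih d hd0 n)
  intro c hc n
  ext m
  have := PowerSeries.X_pow_dvd_iff.mp (all (m + 1) c hc n) m (Nat.lt_succ_self m)
  simpa using this

lemma aux_lower (p : ℕ) [hp : Fact p.Prime] {F K L : Type*} [Field F] [CharP F p] [Field K] [Field L]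
    [Algebra (PowerSeries F) K] [IsFractionRing (PowerSeries F) K] [Algebra K L]
    [Algebra (PowerSeries F) L] [IsScalarTower (PowerSeries F) K L] [FiniteDimensional K L]
    (Q : Fin 3 → F)
    (hQ : ∀ c : (Fin 3 → Fin p) → F, ∑ n, c n ^ p * ∏ i, Q i ^ (n i : ℕ) = 0 → ∀ n, c n = 0)
    (T q r s x : L) (hT : T = algebraMap (PowerSeries F) L PowerSeries.X)
    (hq : q = algebraMap (PowerSeries F) L (PowerSeries.C (Q 0)))
    (hr : r = algebraMap (PowerSeries F) L (PowerSeries.C (Q 1)))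
    (hs : s = algebraMap (PowerSeries F) L (PowerSeries.C (Q 2)))
    (hx : ((x ^ p - q) ^ p - T ^ p * r) ^ p + T ^ (p ^ 4) * x - T ^ (p ^ 3) * s = 0) :
    p ^ 3 ≤ Module.finrank K L := by
  have hAL : Function.Injective (algebraMap (PowerSeries F) L) := by
    rw [IsScalarTower.algebraMap_eq (PowerSeries F) K L]
    exact (algebraMap K L).injective.comp (IsFractionRing.injective (PowerSeries F) K)
  have hT0 : T ≠ 0 := by
    rw [hT, Ne, map_eq_zero_iff _ hAL]
    exact PowerSeries.X_ne_zero
  have iT : IsIntegral (PowerSeries F) T := hT ▸ isIntegral_algebraMap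
  have iq : IsIntegral (PowerSeries F) q := hq ▸ isIntegral_algebraMap
  have ir : IsIntegral (PowerSeries F) r := hr ▸ isIntegral_algebraMap
  have is : IsIntegral (PowerSeries F) s := hs ▸ isIntegral_algebraMap
  have h2p := hp.out.two_le
  have hp0 := hp.out.pos
  -- exponents
  obtain ⟨u, hu⟩ : ∃ u, p ^ 2 = p + (u + 1) := ⟨p ^ 2 - p - 1, by nlinarith [Nat.sub_add_cancel (show p + 1 ≤ p ^ 2 by nlinarith), Nat.sub_sub (p ^ 2) p 1]⟩
  obtain ⟨v, hv⟩ : ∃ v, p ^ 4 = p ^ 3 + (v + 1) := by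
    have : p ^ 3 < p ^ 4 := Nat.pow_lt_pow_right h2p (by norm_num)
    exact ⟨p ^ 4 - p ^ 3 - 1, by omega⟩
  obtain ⟨y, hy⟩ : ∃ y, x ^ p - q = T * y := ⟨(x ^ p - q) / T, by field_simp⟩
  obtain ⟨w, hw⟩ : ∃ w, y ^ p - r = T ^ (u + 1) * w := ⟨(y ^ p - r) / T ^ (u + 1), by field_simp⟩
  have hw2 : w ^ p = s - T ^ (v + 1) * x := by
    have e1 : (x ^ p - q) ^ p - T ^ p * r = T ^ (p ^ 2) * w := by
      rw [hy, mul_pow, ← mul_sub, hw, hu, pow_add]; ring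
    have e2 : T ^ (p ^ 3) * (w ^ p - (s - T ^ (v + 1) * x)) = 0 := by
      rw [e1, mul_pow, ← pow_mul, hv, pow_add] at hx
      have : p ^ 2 * p = p ^ 3 := by ring
      rw [this] at hx
      linear_combination hx
    exact sub_eq_zero.mp ((mul_eq_zero.mp e2).resolve_left (pow_ne_zero _ hT0))
  have : CharP (PowerSeries F) p :=
    charP_of_injective_ringHom (PowerSeries.C_injective (R := F)) p
  have : CharP L p := charP_of_injective_ringHom hAL p
  have ix : IsIntegral (PowerSeries F) x := by
    have hx' : x ^ (p ^ 3) + T ^ (p ^ 4) * x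
        - (q ^ (p ^ 2) + T ^ (p ^ 2) * r ^ p + T ^ (p ^ 3) * s) = 0 := by
      rw [← hx, sub_pow_char, sub_pow_char, sub_pow_char]
      simp only [mul_pow, ← pow_mul]
      ring
    let P : (PowerSeries F)[X] := X ^ (p ^ 3) + (C (PowerSeries.X ^ (p ^ 4)) * X
        - C ((PowerSeries.C (Q 0)) ^ (p ^ 2) + PowerSeries.X ^ (p ^ 2) * (PowerSeries.C (Q 1)) ^ p
          + PowerSeries.X ^ (p ^ 3) * PowerSeries.C (Q 2)))
    refine ⟨P, ?_, ?_⟩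
    · apply monic_X_pow_add
      have h3 : 1 < p ^ 3 := Nat.one_lt_pow (by norm_num) h2p
      refine lt_of_le_of_lt (degree_linear_le (a := PowerSeries.X ^ (p ^ 4)) (b := -((PowerSeries.C (Q 0)) ^ (p ^ 2) + PowerSeries.X ^ (p ^ 2) * (PowerSeries.C (Q 1)) ^ p
          + PowerSeries.X ^ (p ^ 3) * PowerSeries.C (Q 2))) |> fun h => ?_) (by exact_mod_cast h3 : ((1 : ℕ) : WithBot ℕ) < _)
      simpa [sub_eq_add_neg] using h
    · rw [← hx', hT, hq, hr, hs]
      simp only [P, eval₂_add, eval₂_sub, eval₂_mul, eval₂_C, eval₂_X, map_add, map_mul, map_pow, eval₂_pow]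
      ring
  have iw : IsIntegral (PowerSeries F) w :=
    IsIntegral.of_pow hp0 (by rw [hw2]; exact is.sub ((iT.pow _).mul ix))
  have iy : IsIntegral (PowerSeries F) y := by
    refine IsIntegral.of_pow hp0 ?_
    rw [sub_eq_iff_eq_add.mp hw]
    exact ((iT.pow _).mul iw).add ir
  have hli := aux_indep (K := K) p Q hQ ![⟨x, ix⟩, ⟨y, iy⟩, ⟨w, iw⟩]
    ![⟨y, iy⟩, ⟨T ^ u * w, (iT.pow _).mul iw⟩, ⟨-(T ^ v * x), ((iT.pow _).mul ix).neg⟩] (by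
      intro i
      apply Subtype.ext
      fin_cases i
      · change x ^ p = algebraMap (PowerSeries F) L (PowerSeries.C (Q 0))
          + algebraMap (PowerSeries F) L PowerSeries.X * y
        rw [← hq, ← hT]; linear_combination hy
      · change y ^ p = algebraMap (PowerSeries F) L (PowerSeries.C (Q 1))
          + algebraMap (PowerSeries F) L PowerSeries.X * (T ^ u * w)
        rw [← hr, ← hT]; linear_combination hw
      · change w ^ p = algebraMap (PowerSeries F) L (PowerSeries.C (Q 2))
          + algebraMap (PowerSeries F) L PowerSeries.X * (-(T ^ v * x))
        rw [← hs, ← hT]; linear_combination hw2)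
  simpa using hli.fintype_card_le_finrank

/-- Over `K = k(q,r,s)((t))` with `k` algebraically closed of characteristic `p > 0`, the
polynomial `g = ((Xᵖ − q)ᵖ − tᵖ·r)ᵖ + t^{p⁴}·X − t^{p³}·s` is irreducible and separable;
its degree is `p³`. -/
theorem irreducible_separable_example {k : Type*} [Field k] [IsAlgClosed k]
    (p : ℕ) [hp : Fact p.Prime] [CharP k p]
    (F : Type*) [Field F] [Algebra (MvPolynomial (Fin 3) k) F]
    [IsFractionRing (MvPolynomial (Fin 3) k) F]
    (q r s : F)
    (hq : q = algebraMap (MvPolynomial (Fin 3) k) F (MvPolynomial.X 0))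
    (hr : r = algebraMap (MvPolynomial (Fin 3) k) F (MvPolynomial.X 1))
    (hs : s = algebraMap (MvPolynomial (Fin 3) k) F (MvPolynomial.X 2))
    (t : LaurentSeries F) (ht : t = HahnSeries.single (1 : ℤ) (1 : F))
    (g : Polynomial (LaurentSeries F))
    (hg : g = ((X ^ p - C (algebraMap F (LaurentSeries F) q)) ^ p
          - C (t ^ p * algebraMap F (LaurentSeries F) r)) ^ p
        + C (t ^ (p ^ 4)) * X - C (t ^ (p ^ 3) * algebraMap F (LaurentSeries F) s)) :
    Irreducible g ∧ g.Separable ∧ g.natDegree = p ^ 3 := by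
  classical
  have h2p := hp.out.two_le
  have hinj := IsFractionRing.injective (MvPolynomial (Fin 3) k) F
  have : CharP F p := charP_of_injective_ringHom
    (f := (algebraMap (MvPolynomial (Fin 3) k) F).comp MvPolynomial.C)
    (hinj.comp (MvPolynomial.C_injective _ _)) p
  have : CharP (LaurentSeries F) p :=
    charP_of_injective_ringHom (algebraMap F (LaurentSeries F)).injective p
  have h4 : ((p ^ 3 : ℕ) : LaurentSeries F) = 0 := by
    rw [Nat.cast_pow, CharP.cast_eq_zero, zero_pow (by norm_num)]
  have ht0 : t ≠ 0 := by rw [ht]; simp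
  have h3 : 1 < p ^ 3 := Nat.one_lt_pow (by norm_num) h2p
  generalize hq' : algebraMap F (LaurentSeries F) q = q' at hg
  generalize hr' : algebraMap F (LaurentSeries F) r = r' at hg
  generalize hs' : algebraMap F (LaurentSeries F) s = s' at hg
  have hg2 : g = X ^ (p ^ 3) + (C (t ^ (p ^ 4)) * X
      + C (-(q' ^ (p ^ 2) + t ^ (p ^ 2) * r' ^ p + t ^ (p ^ 3) * s'))) := by
    rw [hg, sub_pow_char, sub_pow_char, sub_pow_char]
    simp only [map_neg, map_add, map_mul, map_pow, mul_pow, ← pow_mul]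
    ring
  have hlin : (C (t ^ (p ^ 4)) * X
      + C (-(q' ^ (p ^ 2) + t ^ (p ^ 2) * r' ^ p + t ^ (p ^ 3) * s'))).degree
      < ((p ^ 3 : ℕ) : WithBot ℕ) :=
    lt_of_le_of_lt degree_linear_le (by exact_mod_cast h3)
  have hmonic : g.Monic := by
    rw [hg2]; exact monic_X_pow_add hlin
  have hdeg : g.natDegree = p ^ 3 := by
    rw [hg2]
    apply natDegree_eq_of_degree_eq_some
    rw [degree_add_eq_left_of_degree_lt, degree_X_pow]
    rwa [degree_X_pow]
  refine ⟨?_, ?_, hdeg⟩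
  · obtain ⟨f, hf, hfg⟩ := exists_irreducible_of_natDegree_pos (f := g) (by rw [hdeg]; omega)
    have : Fact (Irreducible f) := ⟨hf⟩
    have hfin : Module.finrank (LaurentSeries F) (AdjoinRoot f) = f.natDegree := by
      rw [(AdjoinRoot.powerBasis hf.ne_zero).finrank, AdjoinRoot.powerBasis_dim]
    have : FiniteDimensional (LaurentSeries F) (AdjoinRoot f) :=
      (AdjoinRoot.powerBasis hf.ne_zero).finite
    have hroot : eval₂ (algebraMap (LaurentSeries F) (AdjoinRoot f)) (AdjoinRoot.root f) g = 0 :=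
      eval₂_eq_zero_of_dvd_of_eval₂_eq_zero _ _ hfg (AdjoinRoot.eval₂_root f)
    have hC : ∀ a : F, algebraMap (PowerSeries F) (LaurentSeries F) (PowerSeries.C a)
        = algebraMap F (LaurentSeries F) a := by
      intro a
      rw [LaurentSeries.coe_algebraMap, HahnSeries.ofPowerSeries_C, LaurentSeries.algebraMap_apply]
    have hle := aux_lower (K := LaurentSeries F) (L := AdjoinRoot f) p
      (fun i => algebraMap (MvPolynomial (Fin 3) k) F (MvPolynomial.X i))
      (fun c hc n => aux_frac p F c hc n)
      (algebraMap (LaurentSeries F) (AdjoinRoot f) t) (algebraMap (LaurentSeries F) (AdjoinRoot f) q')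
      (algebraMap (LaurentSeries F) (AdjoinRoot f) r') (algebraMap (LaurentSeries F) (AdjoinRoot f) s')
      (AdjoinRoot.root f)
      (by rw [IsScalarTower.algebraMap_apply (PowerSeries F) (LaurentSeries F) (AdjoinRoot f),
            LaurentSeries.coe_algebraMap, HahnSeries.ofPowerSeries_X, ht])
      (by rw [IsScalarTower.algebraMap_apply (PowerSeries F) (LaurentSeries F) (AdjoinRoot f),
            hC, ← hq', hq])
      (by rw [IsScalarTower.algebraMap_apply (PowerSeries F) (LaurentSeries F) (AdjoinRoot f),
            hC, ← hr', hr])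
      (by rw [IsScalarTower.algebraMap_apply (PowerSeries F) (LaurentSeries F) (AdjoinRoot f),
            hC, ← hs', hs])
      (by
        rw [hg] at hroot
        simpa only [eval₂_add, eval₂_sub, eval₂_mul, eval₂_C, eval₂_X, eval₂_pow, map_mul,
          map_pow] using hroot)
    rw [hfin, ← hdeg] at hle
    exact (associated_of_dvd_of_natDegree_le hfg hmonic.ne_zero hle).irreducible hf
  · have hder : derivative g = C (t ^ (p ^ 4)) := by
      rw [hg2, derivative_add, derivative_add, derivative_C_mul_X, derivative_C, derivative_X_pow]
      simp
    rw [separable_def, hder]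
    exact (isUnit_C.mpr (pow_ne_zero _ ht0).isUnit) |> fun h => (isCoprime_one_right.of_isCoprime_of_dvd_right h.dvd)
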